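/- Let F be a field of characteristic zero, r a positive integer, and N an r×r matrix over F((t)) such that t·N has all entries in F[[t]]; let R be the residue matrix of N, namely the matrix of constant terms of t·N. Suppose the characteristic polynomial of R factors over F as a product of linear factors ∏ᵢ (X − λᵢ) with every λᵢ a rational number (viewed in F via the inclusion ℚ ⊆ F), and let e be a positive integer such that e·λᵢ ∈ ℤ for all i. Let M(s) := e·s^{e−1}·N(s^e) denote the r×r matrix over F((s)) obtained from N by the substitution t = s^e (which sends Σᵢ aᵢtⁱ to Σᵢ aᵢs^{e·i}) followed by multiplication by e·s^{e−1}. Then there exists H ∈ GL_r(F[s,s⁻¹]) such that the gauge transform M_[H] := H·M·H⁻¹ + H′·H⁻¹ has at most a simple pole at s = 0 (i.e. s·M_[H] has all entries in F[[s]]) and its residue matrix (the matrix of constant terms of s·M_[H]) is nilpotent. -/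

import Mathlib

/-!
Call two connection matrices *gauge equivalent* when a matrix invertible over the Laurent
polynomials transforms one into the other; by the Leibniz rule this relation is transitive
(`GaugeEquiv.trans`), so the required gauge transform can be built from elementary steps.
There are two kinds of steps.

* A constant matrix `Q ∈ GL_r(F)` conjugates all coefficients (`gaugeEquiv_const`).
* A diagonal matrix `diag(s^(w i))` multiplies the `(i, j)` entry by `s^(w i - w j)` and adds
  `diag(w i)` to the residue (`gaugeEquiv_shear`).

The residue matrix of the pulled back connection is `e` times the original one, so its
eigenvalues are integers. Taking `w` constant shifts all of them until they are `≤ 0`. Given an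
eigenvalue `z` of the residue, a constant gauge turns an eigenvector for `z` into a
coordinate vector `e_k`; the `k`-th column of the residue is then `z • e_k`, so the gauge by
`diag(1, …, s, …, 1)` (with `s` in position `k`) still leaves a simple pole, and the
`k`-th row of the new residue is `(z + 1) • e_kᵀ`. Expanding both characteristic polynomials
along that column, respectively row, shows that one root `z` has been replaced by `z + 1` and
the others are unchanged (`raise_eigenvalue`). Repeating this brings all eigenvalues to `0`, and
the residue is then nilpotent by the Cayley–Hamilton theorem.
-/

/-- An element of the Laurent series field `F((t))` lies in the canonical image of the
power series ring `F[[t]]`. -/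
def InPowerSeries (F : Type*) [Field F] (x : LaurentSeries F) : Prop :=
  x ∈ Set.range (HahnSeries.ofPowerSeries ℤ F)

/-- An element of the Laurent series field `F((t))` lies in the canonical image of the
Laurent polynomial ring `F[t,t⁻¹]`: it is of the form `t⁻ⁿ · q(t)` for a polynomial `q`. -/
def InLaurentPoly (F : Type*) [Field F] (x : LaurentSeries F) : Prop :=
  ∃ (n : ℕ) (q : Polynomial F),
    x = HahnSeries.single (-n : ℤ) (1 : F) * HahnSeries.ofPowerSeries ℤ F (q : PowerSeries F)

/-- The entrywise formal derivative of a matrix of Laurent series. -/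
noncomputable def matDeriv (F : Type*) [Field F] {r : ℕ}
    (M : Matrix (Fin r) (Fin r) (LaurentSeries F)) :
    Matrix (Fin r) (Fin r) (LaurentSeries F) :=
  M.map (LaurentSeries.derivative F)

/-- A matrix `M` over `F((t))` has at most a simple pole at `t = 0`: every entry of `t·M`
lies in `F[[t]]`. -/
def SimplePole (F : Type*) [Field F] {r : ℕ}
    (M : Matrix (Fin r) (Fin r) (LaurentSeries F)) : Prop :=
  ∀ i j, InPowerSeries F (HahnSeries.single (1 : ℤ) (1 : F) * M i j)

/-- The residue matrix of a matrix over `F((t))` with at most a simple pole at `t = 0`: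
the matrix of constant terms of `t·M`. -/
noncomputable def residueMatrix (F : Type*) [Field F] {r : ℕ}
    (M : Matrix (Fin r) (Fin r) (LaurentSeries F)) : Matrix (Fin r) (Fin r) F :=
  Matrix.of fun i j => (HahnSeries.single (1 : ℤ) (1 : F) * M i j).coeff 0

open HahnSeries in
/-- The Euler operator `t·d/dt` multiplies the coefficient of `tⁿ` by `n`. -/
lemma euler_coeff (F : Type*) [Field F] (f : LaurentSeries F) (n : ℤ) :
    (single (1 : ℤ) (1 : F) * LaurentSeries.derivative F f).coeff n = (n : F) * f.coeff n := by
  rw [coeff_single_mul, LaurentSeries.derivative_apply, LaurentSeries.hasseDeriv_coeff]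
  simp

open HahnSeries in
/-- The Leibniz rule. It is checked for the Euler operator, where it reads
`(i + j) fᵢ gⱼ = i fᵢ gⱼ + fᵢ j gⱼ` on coefficients. -/
lemma derivative_mul' (F : Type*) [Field F] (f g : LaurentSeries F) :
    LaurentSeries.derivative F (f * g) =
      LaurentSeries.derivative F f * g + f * LaurentSeries.derivative F g := by
  have h1 : single (1 : ℤ) (1 : F) ≠ 0 := by simp
  apply mul_left_cancel₀ h1
  have e : single (1 : ℤ) (1 : F) *
      (LaurentSeries.derivative F f * g + f * LaurentSeries.derivative F g) =
      (single (1 : ℤ) (1 : F) * LaurentSeries.derivative F f) * g +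
        f * (single (1 : ℤ) (1 : F) * LaurentSeries.derivative F g) := by ring
  rw [e]
  ext n
  have hs : ∀ h : LaurentSeries F,
      (single (1 : ℤ) (1 : F) * LaurentSeries.derivative F h).support ⊆ h.support := by
    intro h i hi hc
    apply hi
    rw [euler_coeff, hc, mul_zero]
  rw [euler_coeff, coeff_add, coeff_mul_left' f.isPWO_support (hs f),
    coeff_mul_right' g.isPWO_support (hs g), coeff_mul, Finset.mul_sum,
    ← Finset.sum_add_distrib]
  refine Finset.sum_congr rfl fun ij hij => ?_
  rw [euler_coeff, euler_coeff]
  have : ij.1 + ij.2 = n := by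
    simpa using (Finset.mem_antidiagonal.mp hij).2.2
  rw [← this]
  push_cast
  ring

lemma matDeriv_mul (F : Type*) [Field F] {r : ℕ}
    (A B : Matrix (Fin r) (Fin r) (LaurentSeries F)) :
    matDeriv F (A * B) = matDeriv F A * B + A * matDeriv F B := by
  ext1 i j
  simp only [matDeriv, Matrix.map_apply, Matrix.mul_apply, Matrix.add_apply, map_sum,
    derivative_mul', Finset.sum_add_distrib]

/-! ### Laurent polynomials -/

open HahnSeries in
lemma inLaurentPoly_single (F : Type*) [Field F] (w : ℤ) (c : F) :
    InLaurentPoly F (single w c) := by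
  refine ⟨(-w).toNat, Polynomial.monomial w.toNat c, ?_⟩
  have : (ofPowerSeries ℤ F (Polynomial.monomial w.toNat c : Polynomial F)) =
      single (w.toNat : ℤ) c := by
    rw [← Polynomial.C_mul_X_pow_eq_monomial, Polynomial.coe_mul, Polynomial.coe_pow,
      Polynomial.coe_X, Polynomial.coe_C, map_mul, ofPowerSeries_X_pow, ofPowerSeries_C,
      C_apply, single_mul_single]
    simp
  rw [this, single_mul_single, one_mul,
    show -((-w).toNat : ℤ) + (w.toNat : ℤ) = w by omega]

lemma InLaurentPoly.mul {F : Type*} [Field F] {x y : LaurentSeries F}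
    (hx : InLaurentPoly F x) (hy : InLaurentPoly F y) : InLaurentPoly F (x * y) := by
  obtain ⟨n, p, rfl⟩ := hx
  obtain ⟨m, q, rfl⟩ := hy
  refine ⟨n + m, p * q, ?_⟩
  rw [Polynomial.coe_mul, map_mul]
  have : HahnSeries.single (-((n + m : ℕ) : ℤ)) (1 : F) =
      HahnSeries.single (-(n : ℤ)) (1 : F) * HahnSeries.single (-(m : ℤ)) (1 : F) := by
    rw [HahnSeries.single_mul_single, one_mul, Nat.cast_add, neg_add]
  rw [this]
  ring

lemma InLaurentPoly.add {F : Type*} [Field F] {x y : LaurentSeries F}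
    (hx : InLaurentPoly F x) (hy : InLaurentPoly F y) : InLaurentPoly F (x + y) := by
  obtain ⟨n, p, rfl⟩ := hx
  obtain ⟨m, q, rfl⟩ := hy
  refine ⟨n + m, Polynomial.X ^ m * p + Polynomial.X ^ n * q, ?_⟩
  rw [Polynomial.coe_add, Polynomial.coe_mul, Polynomial.coe_mul, map_add, map_mul, map_mul,
    Polynomial.coe_pow, Polynomial.coe_pow, Polynomial.coe_X, HahnSeries.ofPowerSeries_X_pow,
    HahnSeries.ofPowerSeries_X_pow, mul_add, ← mul_assoc, ← mul_assoc,
    HahnSeries.single_mul_single, HahnSeries.single_mul_single, one_mul,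
    show -((n + m : ℕ) : ℤ) + (m : ℤ) = -n by push_cast; ring,
    show -((n + m : ℕ) : ℤ) + (n : ℤ) = -m by push_cast; ring]

lemma inLaurentPoly_matMul {F : Type*} [Field F] {r : ℕ}
    {A B : Matrix (Fin r) (Fin r) (LaurentSeries F)}
    (hA : ∀ i j, InLaurentPoly F (A i j)) (hB : ∀ i j, InLaurentPoly F (B i j)) (i j : Fin r) :
    InLaurentPoly F ((A * B) i j) := by
  rw [Matrix.mul_apply]
  refine Finset.sum_induction _ _ (fun _ _ => InLaurentPoly.add) ?_
    fun k _ => (hA i k).mul (hB k j)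
  simpa using inLaurentPoly_single F 0 0

/-! ### Gauge equivalence -/

/-- `B` is the gauge transform `H A H⁻¹ + H' H⁻¹` of `A` by a matrix `H` invertible over the
Laurent polynomials. -/
def GaugeEquiv (F : Type*) [Field F] {r : ℕ}
    (A B : Matrix (Fin r) (Fin r) (LaurentSeries F)) : Prop :=
  ∃ H Hinv : Matrix (Fin r) (Fin r) (LaurentSeries F),
    H * Hinv = 1 ∧ Hinv * H = 1 ∧
    (∀ i j, InLaurentPoly F (H i j)) ∧ (∀ i j, InLaurentPoly F (Hinv i j)) ∧
    B = H * A * Hinv + matDeriv F H * Hinv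

lemma GaugeEquiv.trans {F : Type*} [Field F] {r : ℕ}
    {A B C : Matrix (Fin r) (Fin r) (LaurentSeries F)}
    (h₁ : GaugeEquiv F A B) (h₂ : GaugeEquiv F B C) : GaugeEquiv F A C := by
  obtain ⟨H, H', h, h', hp, hp', rfl⟩ := h₁
  obtain ⟨K, K', k, k', kp, kp', rfl⟩ := h₂
  refine ⟨K * H, H' * K', ?_, ?_, inLaurentPoly_matMul kp hp, inLaurentPoly_matMul hp' kp', ?_⟩
  · rw [Matrix.mul_assoc, ← Matrix.mul_assoc H, h, Matrix.one_mul, k]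
  · rw [Matrix.mul_assoc, ← Matrix.mul_assoc K', k', Matrix.one_mul, h']
  · have e : matDeriv F K * H * (H' * K') = matDeriv F K * K' := by
      rw [Matrix.mul_assoc, ← Matrix.mul_assoc H, h, Matrix.one_mul]
    rw [matDeriv_mul, Matrix.add_mul, e]
    simp only [Matrix.mul_add, Matrix.add_mul, Matrix.mul_assoc]
    abel

/-- The gauge transform by the diagonal matrix with entries `s^(w i)`. -/
lemma gaugeEquiv_shear (F : Type*) [Field F] {r : ℕ}
    (A : Matrix (Fin r) (Fin r) (LaurentSeries F)) (w : Fin r → ℤ) :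
    ∃ B, GaugeEquiv F A B ∧ ∀ i j n, (B i j).coeff n =
      (A i j).coeff (n - w i + w j) + if i = j ∧ n = -1 then (w i : F) else 0 := by
  refine ⟨_, ⟨Matrix.diagonal fun i => HahnSeries.single (w i) 1,
    Matrix.diagonal fun i => HahnSeries.single (-w i) 1, ?_, ?_, ?_, ?_, rfl⟩, ?_⟩
  · simp [Matrix.diagonal_mul_diagonal, HahnSeries.single_mul_single]
  · simp [Matrix.diagonal_mul_diagonal, HahnSeries.single_mul_single]
  · intro i j
    rw [Matrix.diagonal_apply]
    split_ifs
    · exact inLaurentPoly_single F _ _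
    · simpa using inLaurentPoly_single F 0 0
  · intro i j
    rw [Matrix.diagonal_apply]
    split_ifs
    · exact inLaurentPoly_single F _ _
    · simpa using inLaurentPoly_single F 0 0
  · intro i j n
    rw [Matrix.add_apply, HahnSeries.coeff_add, Matrix.mul_diagonal, Matrix.diagonal_mul,
      HahnSeries.coeff_mul_single, HahnSeries.coeff_single_mul, one_mul, mul_one,
      Matrix.mul_diagonal, HahnSeries.coeff_mul_single, mul_one]
    rw [show n - -w j - w i = n - w i + w j by ring]
    congr 1
    rw [matDeriv, Matrix.map_apply, LaurentSeries.derivative_apply,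
      LaurentSeries.hasseDeriv_coeff, Matrix.diagonal_apply]
    by_cases hij : i = j
    · subst hij
      by_cases hn : n = -1
      · subst hn
        simp
      · simp [hn, show n + w i + 1 ≠ w i by omega]
    · simp [hij]

/-- The gauge transform by a constant invertible matrix conjugates every coefficient. -/
lemma gaugeEquiv_const (F : Type*) [Field F] {r : ℕ}
    (A : Matrix (Fin r) (Fin r) (LaurentSeries F)) (Q P : Matrix (Fin r) (Fin r) F)
    (hQP : Q * P = 1) :
    ∃ B, GaugeEquiv F A B ∧ ∀ i j n, (B i j).coeff n =
      (Q * (A.map fun x => x.coeff n) * P) i j := by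
  have hPQ : P * Q = 1 := mul_eq_one_comm.mp hQP
  have hC : ∀ (S : Matrix (Fin r) (Fin r) F) i j,
      InLaurentPoly F (S.map (HahnSeries.C (Γ := ℤ)) i j) := fun S i j =>
    inLaurentPoly_single F 0 (S i j)
  refine ⟨_, ⟨Q.map (HahnSeries.C (Γ := ℤ)), P.map (HahnSeries.C (Γ := ℤ)), ?_, ?_,
    hC Q, hC P, rfl⟩, ?_⟩
  · rw [← Matrix.map_mul, hQP, Matrix.map_one _ (map_zero _) (map_one _)]
  · rw [← Matrix.map_mul, hPQ, Matrix.map_one _ (map_zero _) (map_one _)]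
  · intro i j n
    have hd : matDeriv F (Q.map (HahnSeries.C (Γ := ℤ))) = 0 := by
      ext a b m
      rw [matDeriv, Matrix.map_apply, Matrix.map_apply, LaurentSeries.derivative_apply,
        LaurentSeries.hasseDeriv_coeff, HahnSeries.C_apply, HahnSeries.coeff_single]
      by_cases hm : m = -1
      · simp [hm]
      · simp [show m + 1 ≠ 0 by omega]
    rw [hd, Matrix.zero_mul, add_zero]
    simp only [Matrix.mul_apply, Matrix.map_apply, HahnSeries.coeff_sum]
    refine Finset.sum_congr rfl fun k _ => ?_
    rw [mul_comm, HahnSeries.C_mul_eq_smul, HahnSeries.coeff_smul, HahnSeries.coeff_sum,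
      smul_eq_mul, mul_comm]
    congr 1
    refine Finset.sum_congr rfl fun l _ => ?_
    rw [HahnSeries.C_mul_eq_smul, HahnSeries.coeff_smul, smul_eq_mul]

/-! ### Simple poles and residues -/

lemma simplePole_iff (F : Type*) [Field F] {r : ℕ}
    (A : Matrix (Fin r) (Fin r) (LaurentSeries F)) :
    SimplePole F A ↔ ∀ i j, ∀ n < (-1 : ℤ), (A i j).coeff n = 0 := by
  refine forall₂_congr fun i j => ?_
  constructor
  · rintro ⟨f, hf⟩ n hn
    have h := congrArg (fun x => HahnSeries.coeff x (n + 1)) hf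
    simp only [HahnSeries.coeff_single_mul, one_mul, add_sub_cancel_right] at h
    rw [← h, PowerSeries.coeff_coe, if_pos (by omega)]
  · intro h
    refine ⟨PowerSeries.mk fun n => (A i j).coeff ((n : ℤ) - 1), ?_⟩
    ext n
    rw [PowerSeries.coeff_coe, HahnSeries.coeff_single_mul, one_mul]
    split_ifs with hn
    · rw [h _ (by omega)]
    · rw [PowerSeries.coeff_mk, Int.natAbs_of_nonneg (by omega)]

lemma residueMatrix_apply (F : Type*) [Field F] {r : ℕ}
    (A : Matrix (Fin r) (Fin r) (LaurentSeries F)) (i j : Fin r) :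
    residueMatrix F A i j = (A i j).coeff (-1) := by
  simp [residueMatrix, HahnSeries.coeff_single_mul]

/-! ### Characteristic polynomials -/

/-- If the `k`-th column of `A` is `z • e_k`, the `k`-th row of `B` is `z' • e_kᵀ`, and the two
matrices agree away from row and column `k`, then both characteristic polynomials are a linear
factor times the same minor. -/
lemma charpoly_replace {F : Type*} [Field F] {r : ℕ} (A B : Matrix (Fin r) (Fin r) F)
    (k : Fin r) (z z' : F) (q : Polynomial F)
    (hA : ∀ i, A i k = if i = k then z else 0) (hB : ∀ j, B k j = if j = k then z' else 0)
    (hAB : ∀ i j, i ≠ k → j ≠ k → A i j = B i j)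
    (hq : A.charpoly = (Polynomial.X - Polynomial.C z) * q) :
    B.charpoly = (Polynomial.X - Polynomial.C z') * q := by
  obtain ⟨n, rfl⟩ : ∃ n, r = n + 1 := ⟨r - 1, by have := k.pos; omega⟩
  have h1 : A.charpoly = (Polynomial.X - Polynomial.C z) *
      (A.charmatrix.submatrix k.succAbove k.succAbove).det := by
    rw [Matrix.charpoly, Matrix.det_succ_column _ k, Finset.sum_eq_single k]
    · rw [← two_mul, Matrix.charmatrix_apply_eq, hA]
      simp [pow_mul]
    · intro i _ hi
      rw [Matrix.charmatrix_apply_ne _ _ _ hi, hA]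
      simp [hi]
    · simp
  have h2 : B.charpoly = (Polynomial.X - Polynomial.C z') *
      (B.charmatrix.submatrix k.succAbove k.succAbove).det := by
    rw [Matrix.charpoly, Matrix.det_succ_row _ k, Finset.sum_eq_single k]
    · rw [← two_mul, Matrix.charmatrix_apply_eq, hB]
      simp [pow_mul]
    · intro i _ hi
      rw [Matrix.charmatrix_apply_ne _ _ _ hi.symm, hB]
      simp [hi]
    · simp
  have h3 : A.charmatrix.submatrix k.succAbove k.succAbove =
      B.charmatrix.submatrix k.succAbove k.succAbove := by
    ext1 i j
    simp only [Matrix.submatrix_apply, Matrix.charmatrix_apply]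
    rw [hAB _ _ (Fin.succAbove_ne k i) (Fin.succAbove_ne k j)]
  rw [h1] at hq
  rw [h2, ← h3, mul_left_cancel₀ (Polynomial.X_sub_C_ne_zero z) hq]

/-- An eigenvalue `z` is moved, by a change of basis, to a column `z • e_k`. -/
lemma exists_conj_column {F : Type*} [Field F] {r : ℕ} (R : Matrix (Fin r) (Fin r) F) (z : F)
    (hz : R.charpoly.eval z = 0) :
    ∃ (Q P : Matrix (Fin r) (Fin r) F) (k : Fin r), Q * P = 1 ∧
      ∀ i, (Q * R * P) i k = if i = k then z else 0 := by
  rw [Matrix.eval_charpoly] at hz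
  obtain ⟨v, hv, hRv⟩ := Matrix.exists_mulVec_eq_zero_iff.mpr hz
  obtain ⟨k, hk⟩ := Function.ne_iff.mp hv
  have hRv' : R.mulVec v = z • v := by
    rw [Matrix.sub_mulVec, sub_eq_zero] at hRv
    rw [← hRv]
    ext i
    simp [Matrix.scalar_apply, Matrix.mulVec_diagonal]
  -- The identity matrix with its `k`-th column replaced by `v` has determinant `v k`.
  set P : Matrix (Fin r) (Fin r) F := (1 : Matrix (Fin r) (Fin r) F).updateCol k v with hP
  have hdet : IsUnit P.det := by
    rw [hP, ← Matrix.cramer_apply, Matrix.cramer_one]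
    exact isUnit_iff_ne_zero.mpr hk
  have hPk : P.mulVec (Pi.single k 1) = v := by
    ext i
    simp [hP]
  refine ⟨P⁻¹, P, k, Matrix.nonsing_inv_mul _ hdet, fun i => ?_⟩
  have h1 : (P⁻¹ * R * P).mulVec (Pi.single k 1) = z • Pi.single k 1 := by
    rw [← Matrix.mulVec_mulVec, hPk, ← Matrix.mulVec_mulVec, hRv', Matrix.mulVec_smul, ← hPk,
      Matrix.mulVec_mulVec, Matrix.nonsing_inv_mul _ hdet, Matrix.one_mulVec]
  have h2 := congrFun h1 i
  simpa [Pi.single_apply] using h2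

lemma charpoly_smul_prod {F : Type*} [Field F] [CharZero F] {r : ℕ}
    (R : Matrix (Fin r) (Fin r) F) (c : F) (hc : c ≠ 0) (l : Fin r → F)
    (h : R.charpoly = ∏ i, (Polynomial.X - Polynomial.C (l i))) :
    (c • R).charpoly = ∏ i, (Polynomial.X - Polynomial.C (c * l i)) := by
  apply Polynomial.funext
  intro x
  have e : Matrix.scalar (Fin r) x - c • R = c • (Matrix.scalar (Fin r) (c⁻¹ * x) - R) := by
    rw [smul_sub]
    congr 1
    ext i j
    simp [Matrix.scalar_apply, Matrix.diagonal_apply, hc]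
  rw [Matrix.eval_charpoly, e, Matrix.det_smul, ← Matrix.eval_charpoly, h,
    Polynomial.eval_prod, Polynomial.eval_prod, Fintype.card, ← Finset.prod_const,
    ← Finset.prod_mul_distrib]
  refine Finset.prod_congr rfl fun i _ => ?_
  simp only [Polynomial.eval_sub, Polynomial.eval_X, Polynomial.eval_C]
  field_simp

/-! ### Shifting eigenvalues -/

/-- One shearing step: a root `z` of the characteristic polynomial of the residue is replaced
by `z + 1`. -/
lemma raise_eigenvalue {F : Type*} [Field F] {r : ℕ}
    (A : Matrix (Fin r) (Fin r) (LaurentSeries F)) (hA : SimplePole F A) (z : F)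
    (q : Polynomial F)
    (hq : (residueMatrix F A).charpoly = (Polynomial.X - Polynomial.C z) * q) :
    ∃ B, GaugeEquiv F A B ∧ SimplePole F B ∧
      (residueMatrix F B).charpoly = (Polynomial.X - Polynomial.C (z + 1)) * q := by
  obtain ⟨Q, P, k, hQP, hcol⟩ := exists_conj_column (residueMatrix F A) z (by simp [hq])
  obtain ⟨A₁, hAA₁, hA₁⟩ := gaugeEquiv_const F A Q P hQP
  have hres₁ : residueMatrix F A₁ = Q * residueMatrix F A * P := by
    ext i j
    rw [residueMatrix_apply, hA₁]
    have : (A.map fun x => x.coeff (-1)) = residueMatrix F A := by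
      ext a b
      rw [residueMatrix_apply, Matrix.map_apply]
    rw [this]
  have hchar₁ : (residueMatrix F A₁).charpoly = (Polynomial.X - Polynomial.C z) * q := by
    rw [hres₁, Matrix.charpoly_mul_comm, ← Matrix.mul_assoc, mul_eq_one_comm.mp hQP,
      Matrix.one_mul, hq]
  have hpole₁ : ∀ i j, ∀ n < (-1 : ℤ), (A₁ i j).coeff n = 0 := by
    intro i j n hn
    have : (A.map fun x => x.coeff n) = 0 := by
      ext a b
      exact (simplePole_iff F A).mp hA a b n hn
    rw [hA₁, this]
    simp
  have hcol₁ : ∀ i, (A₁ i k).coeff (-1) = if i = k then z else 0 := by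
    intro i
    rw [← residueMatrix_apply, hres₁, hcol]
  obtain ⟨B, hAB, hB⟩ := gaugeEquiv_shear F A₁ (fun i => if i = k then 1 else 0)
  refine ⟨B, hAA₁.trans hAB, (simplePole_iff F B).mpr ?_, ?_⟩
  · intro i j n hn
    rw [hB, if_neg (show ¬(i = j ∧ n = -1) by omega), add_zero]
    by_cases hj : j = k
    · subst hj
      by_cases hi : i = j
      · simpa [hi] using hpole₁ j j n hn
      · -- Here the pole order could grow; it does not, as this entry of the residue vanishes.
        rcases eq_or_ne n (-2) with rfl | hn'
        · simpa [hi] using hcol₁ i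
        · exact hpole₁ _ _ _ (by simp [hi]; omega)
    · exact hpole₁ _ _ _ (by simp only [if_neg hj]; split_ifs <;> omega)
  · refine charpoly_replace (residueMatrix F A₁) _ k z (z + 1) q ?_ ?_ ?_ hchar₁
    · intro i
      rw [residueMatrix_apply, hcol₁]
    · intro j
      rw [residueMatrix_apply, hB]
      by_cases hj : j = k
      · subst hj
        simp [hcol₁]
      · have := hpole₁ k j (-2) (by norm_num)
        simp [hj, Ne.symm hj, this]
    · intro i j hi hj
      rw [residueMatrix_apply, residueMatrix_apply, hB]
      by_cases hij : i = j <;> simp [hi, hj]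

/-- If all eigenvalues `-w i` of the residue are integers `≤ 0`, they can all be raised
to `0`. -/
lemma exists_nilpotent_of_nonpos {F : Type*} [Field F] {r : ℕ} (m : ℕ) :
    ∀ (A : Matrix (Fin r) (Fin r) (LaurentSeries F)) (w : Fin r → ℕ), ∑ i, w i = m →
      SimplePole F A →
      (residueMatrix F A).charpoly = ∏ i, (Polynomial.X - Polynomial.C (-(w i : F))) →
      ∃ B, GaugeEquiv F A B ∧ SimplePole F B ∧ IsNilpotent (residueMatrix F B) := by
  induction m with
  | zero =>
    intro A w hw hA hchar
    have hw' : ∀ i, w i = 0 := by simpa using hw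
    obtain ⟨B, hAB, hB⟩ := gaugeEquiv_shear F A 0
    have hBA : B = A := by
      ext i j n
      simp [hB]
    rw [hBA] at hAB
    refine ⟨A, hAB, hA, r, ?_⟩
    have h := Matrix.aeval_self_charpoly (residueMatrix F A)
    rw [hchar] at h
    simpa [hw'] using h
  | succ m ih =>
    intro A w hw hA hchar
    obtain ⟨i, hi⟩ : ∃ i, w i ≠ 0 := by
      by_contra! h
      simp [h] at hw
    rw [← Finset.mul_prod_erase _ _ (Finset.mem_univ i)] at hchar
    obtain ⟨B, hAB, hB, hBc⟩ := raise_eigenvalue A hA _ _ hchar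
    have hsum : ∑ j, Function.update w i (w i - 1) j = m := by
      have h := Finset.add_sum_erase Finset.univ w (Finset.mem_univ i)
      have h' : ∑ j ∈ Finset.univ.erase i, Function.update w i (w i - 1) j =
          ∑ j ∈ Finset.univ.erase i, w j := Finset.sum_congr rfl fun j hj =>
        Function.update_of_ne (Finset.ne_of_mem_erase hj) _ _
      rw [← Finset.add_sum_erase _ _ (Finset.mem_univ i), Function.update_self, h']
      omega
    have hprod : (residueMatrix F B).charpoly =
        ∏ j, (Polynomial.X - Polynomial.C (-(Function.update w i (w i - 1) j : F))) := by
      rw [hBc, ← Finset.mul_prod_erase _ _ (Finset.mem_univ i), Function.update_self]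
      congr 1
      · rw [Nat.cast_sub (Nat.one_le_iff_ne_zero.mpr hi), Nat.cast_one, neg_sub', sub_neg_eq_add]
      · refine Finset.prod_congr rfl fun j hj => ?_
        rw [Function.update_of_ne (Finset.ne_of_mem_erase hj)]
    obtain ⟨C, hBC, hC⟩ := ih B _ hsum hB hprod
    exact ⟨C, hAB.trans hBC, hC⟩

/-- Semistable reduction for the connection matrix: if `N` has at most a simple pole with
residue eigenvalues rational numbers `λᵢ`, and `e·λᵢ ∈ ℤ`, then the pulled back matrix
`M(s) = e·s^(e-1)·N(s^e)` can be gauge transformed, by a matrix invertible over the Laurent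
polynomials, to have at most a simple pole at `s = 0` with nilpotent residue matrix. -/
theorem semistable_reduction_of_connection_matrix
    (F : Type*) [Field F] [CharZero F] (r : ℕ) (hr : 0 < r)
    (N : Matrix (Fin r) (Fin r) (LaurentSeries F))
    (hN : SimplePole F N)
    (lam : Fin r → ℚ)
    (hchar : (residueMatrix F N).charpoly =
      ∏ i : Fin r, (Polynomial.X - Polynomial.C ((lam i : F))))
    (e : ℕ) (he : 0 < e) (hint : ∀ i, ∃ z : ℤ, (e : ℚ) * lam i = (z : ℚ))
    (M : Matrix (Fin r) (Fin r) (LaurentSeries F))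
    (hM : ∀ (i j : Fin r) (k : ℤ),
      (M i j).coeff k =
        if (e : ℤ) ∣ (k - ((e : ℤ) - 1))
          then (e : ℤ) • (N i j).coeff ((k - ((e : ℤ) - 1)) / (e : ℤ))
          else 0) :
    ∃ H Hinv : Matrix (Fin r) (Fin r) (LaurentSeries F),
      H * Hinv = 1 ∧ Hinv * H = 1 ∧
      (∀ i j, InLaurentPoly F (H i j)) ∧ (∀ i j, InLaurentPoly F (Hinv i j)) ∧
      SimplePole F (H * M * Hinv + matDeriv F H * Hinv) ∧
      IsNilpotent (residueMatrix F (H * M * Hinv + matDeriv F H * Hinv)) := by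
  have he0 : (e : F) ≠ 0 := by exact_mod_cast he.ne'
  choose z hz using hint
  have hMpole : SimplePole F M := by
    refine (simplePole_iff F M).mpr fun i j n hn => ?_
    rw [hM]
    split_ifs with hd
    · obtain ⟨c, hc⟩ := hd
      rw [hc, Int.mul_ediv_cancel_left _ (by omega),
        (simplePole_iff F N).mp hN i j c (by nlinarith), smul_zero]
    · rfl
  have hMres : residueMatrix F M = (e : F) • residueMatrix F N := by
    ext i j
    have h1 : (-1 : ℤ) - ((e : ℤ) - 1) = (e : ℤ) * (-1) := by ring
    rw [residueMatrix_apply, hM, Matrix.smul_apply, residueMatrix_apply, h1,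
      if_pos (dvd_mul_right _ _), Int.mul_ediv_cancel_left _ (by omega)]
    simp
  have hMchar : (residueMatrix F M).charpoly =
      ∏ i, (Polynomial.X - Polynomial.C ((z i : F))) := by
    rw [hMres, charpoly_smul_prod _ _ he0 _ hchar]
    refine Finset.prod_congr rfl fun i _ => ?_
    have h := congrArg (fun x : ℚ => (x : F)) (hz i)
    push_cast at h
    rw [h]
  -- A common upper bound for the eigenvalues, used to shift them all to be `≤ 0`.
  obtain ⟨b, hb⟩ : ∃ b : ℤ, ∀ i, z i ≤ b := by
    obtain ⟨b, hb⟩ := (Set.finite_range z).bddAbove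
    exact ⟨b, fun i => hb ⟨i, rfl⟩⟩
  obtain ⟨A, hMA, hA⟩ := gaugeEquiv_shear F M (fun _ => -b)
  have hApole : SimplePole F A := by
    refine (simplePole_iff F A).mpr fun i j n hn => ?_
    rw [hA, if_neg (by omega), add_zero, sub_add_cancel]
    exact (simplePole_iff F M).mp hMpole i j n hn
  have hAres : residueMatrix F A = residueMatrix F M - Matrix.scalar (Fin r) (b : F) := by
    ext i j
    rw [residueMatrix_apply, hA, Matrix.sub_apply, residueMatrix_apply]
    rw [Matrix.scalar_apply, Matrix.diagonal_apply]
    by_cases hij : i = j <;> simp [hij, sub_eq_add_neg]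
  have hAchar : (residueMatrix F A).charpoly =
      ∏ i, (Polynomial.X - Polynomial.C (-((b - z i).toNat : F))) := by
    rw [hAres, Matrix.charpoly_sub_scalar, hMchar, Polynomial.prod_comp]
    refine Finset.prod_congr rfl fun i _ => ?_
    have h : (((b - z i).toNat : ℤ) : F) = ((b - z i : ℤ) : F) := by
      rw [Int.toNat_of_nonneg (by have := hb i; omega)]
    rw [Int.cast_natCast] at h
    rw [h]
    simp
    ring
  obtain ⟨B, hAB, hB, hBnil⟩ :=
    exists_nilpotent_of_nonpos _ A (fun i => (b - z i).toNat) rfl hApole hAchar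
  obtain ⟨H, Hinv, h1, h2, h3, h4, rfl⟩ := hMA.trans hAB
  exact ⟨H, Hinv, h1, h2, h3, h4, hB, hBnil⟩
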